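/- For t, u ∈ ℝ let f(x,y;t,u) = y² + x⁵ + x³y + tx² + ux²y, and let p(x,y;t,u) = f_xx·f_yy − f_xy² be the determinant of the Hessian of f in (x,y). Then: (i) for all (x,y,t,u), p(x,y;t,u) = 12xy + 40x³ − 9x⁴ + 4t + 4uy − 4u²x² − 12ux³; (ii) for fixed (t,u), there exists a point (x,y) with p = ∂p/∂x = ∂p/∂y = 0 (i.e. the parabolic curve of f(·,·;t,u) has a singular point) if and only if t = (10/27)u³ + (1/36)u⁴, in which case the unique such point is (x,y) = (−u/3, −10u²/9). -/

import Mathlib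

open Asymptotics Filter Set

noncomputable section

/-- Partial derivative in the first variable (∂/∂x). -/
def pdx (f : ℝ × ℝ → ℝ) (p : ℝ × ℝ) : ℝ := deriv (fun s => f (s, p.2)) p.1

/-- Partial derivative in the second variable (∂/∂y). -/
def pdy (f : ℝ × ℝ → ℝ) (p : ℝ × ℝ) : ℝ := deriv (fun s => f (p.1, s)) p.2

/-- f_xx -/
def fxx (f : ℝ × ℝ → ℝ) : ℝ × ℝ → ℝ := pdx (pdx f)
/-- f_xy -/
def fxy (f : ℝ × ℝ → ℝ) : ℝ × ℝ → ℝ := pdy (pdx f)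
/-- f_yy -/
def fyy (f : ℝ × ℝ → ℝ) : ℝ × ℝ → ℝ := pdy (pdy f)

/-- The discriminant δ = f_xy² − f_xx·f_yy of the asymptotic BDE of `f`. -/
def bdeDiscr (f : ℝ × ℝ → ℝ) : ℝ × ℝ → ℝ := fun p => (fxy f p) ^ 2 - fxx f p * fyy f p

/-- The BDE `a dy² + 2b dxdy + c dx² = 0`, regarded as the family of quadratic
forms `ω_p(v) = a(p)v₂² + 2b(p)v₁v₂ + c(p)v₁²`. -/
def BDE (a b c : ℝ × ℝ → ℝ) : (ℝ × ℝ) → (ℝ × ℝ) → ℝ :=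
  fun p v => a p * v.2 ^ 2 + 2 * b p * v.1 * v.2 + c p * v.1 ^ 2

/-- The asymptotic BDE `f_yy dy² + 2 f_xy dxdy + f_xx dx² = 0` of the surface `z = f(x,y)`. -/
def asymBDE (f : ℝ × ℝ → ℝ) : (ℝ × ℝ) → (ℝ × ℝ) → ℝ := BDE (fyy f) (fxy f) (fxx f)

/-- `j^k f(0) = P` : the degree-k Taylor polynomial of `f` at the origin is `P`,
i.e. `f − P = o(‖(x,y)‖^k)` as `(x,y) → 0`. -/
def HasJetAt0 (f P : ℝ × ℝ → ℝ) (k : ℕ) : Prop :=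
  (fun p => f p - P p) =o[nhds (0 : ℝ × ℝ)] fun p => ‖p‖ ^ k

/-- `γ` is an integral curve of the BDE `ω` on the open interval `I`:
`γ` is C¹ on `I` with nowhere-vanishing derivative annihilating `ω`. -/
def IsIntegralCurveOnBDE (ω : (ℝ × ℝ) → (ℝ × ℝ) → ℝ) (γ : ℝ → ℝ × ℝ) (I : Set ℝ) : Prop :=
  (∃ a b : ℝ, I = Set.Ioo a b) ∧
  ∃ dγ : ℝ → ℝ × ℝ, ContinuousOn dγ I ∧
    ∀ t ∈ I, HasDerivAt γ (dγ t) t ∧ dγ t ≠ 0 ∧ ω (γ t) (dγ t) = 0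

/-- Topological equivalence of two BDEs at the origin: a local homeomorphism
fixing `0` sending integral curves of one to integral curves of the other. -/
def TopEquivAt0 (ω Ω : (ℝ × ℝ) → (ℝ × ℝ) → ℝ) : Prop :=
  ∃ (U V : Set (ℝ × ℝ)) (h hinv : ℝ × ℝ → ℝ × ℝ),
    IsOpen U ∧ IsOpen V ∧ (0 : ℝ × ℝ) ∈ U ∧ (0 : ℝ × ℝ) ∈ V ∧ h 0 = 0 ∧
    ContinuousOn h U ∧ ContinuousOn hinv V ∧
    Set.BijOn h U V ∧ Set.InvOn hinv h U V ∧
    (∀ γ I, IsIntegralCurveOnBDE ω γ I → Set.MapsTo γ I U →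
      ∃ σ J, IsIntegralCurveOnBDE Ω σ J ∧ h '' (γ '' I) = σ '' J) ∧
    (∀ σ J, IsIntegralCurveOnBDE Ω σ J → Set.MapsTo σ J V →
      ∃ γ I, IsIntegralCurveOnBDE ω γ I ∧ hinv '' (σ '' J) = γ '' I)

/-- Smooth equivalence of two BDEs at the origin: a local C^∞ diffeomorphism `h`
fixing `0` pulling one family of quadratic forms back to a nonvanishing multiple
of the other. -/
def SmoothEquivAt0 (ω Ω : (ℝ × ℝ) → (ℝ × ℝ) → ℝ) : Prop :=
  ∃ (U V : Set (ℝ × ℝ)) (h hinv : ℝ × ℝ → ℝ × ℝ) (ρ : ℝ × ℝ → ℝ),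
    IsOpen U ∧ IsOpen V ∧ (0 : ℝ × ℝ) ∈ U ∧ (0 : ℝ × ℝ) ∈ V ∧ h 0 = 0 ∧
    ContDiffOn ℝ (⊤ : ℕ∞) h U ∧ ContDiffOn ℝ (⊤ : ℕ∞) hinv V ∧
    Set.BijOn h U V ∧ Set.InvOn hinv h U V ∧
    ContDiffOn ℝ (⊤ : ℕ∞) ρ U ∧ (∀ p ∈ U, ρ p ≠ 0) ∧
    (∀ p ∈ U, ∀ v : ℝ × ℝ, Ω (h p) (fderiv ℝ h p v) = ρ p * ω p v)

/-- Fiber topological equivalence at `0` of two 2-parameter families of BDEs: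
a homeomorphism `φ` of parameter spaces (onto its image), fixing `0`, such that
corresponding members of the families are topologically equivalent at `0`. -/
def FiberTopEquivAt0 (ω Ω : (ℝ × ℝ) → (ℝ × ℝ) → (ℝ × ℝ) → ℝ) : Prop :=
  ∃ (W : Set (ℝ × ℝ)) (φ ψ : ℝ × ℝ → ℝ × ℝ),
    W ∈ nhds (0 : ℝ × ℝ) ∧ φ 0 = 0 ∧
    ContinuousOn φ W ∧ ContinuousOn ψ (φ '' W) ∧
    Set.InvOn ψ φ W (φ '' W) ∧
    ∀ q ∈ W, TopEquivAt0 (ω q) (Ω (φ q))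

/-- The family of surfaces `f(x,y;t,u) = y² + x⁵ + x³y + tx² + ux²y`. -/
def F18 (t u : ℝ) : ℝ × ℝ → ℝ := fun p =>
  p.2 ^ 2 + p.1 ^ 5 + p.1 ^ 3 * p.2 + t * p.1 ^ 2 + u * p.1 ^ 2 * p.2

/-- `p(x,y;t,u) = f_xx·f_yy − f_xy²`, the determinant of the Hessian of `F18`. -/
def P18 (t u : ℝ) : ℝ × ℝ → ℝ := fun p =>
  fxx (F18 t u) p * fyy (F18 t u) p - (fxy (F18 t u) p) ^ 2

lemma poly_deriv18 (a b c d e x : ℝ) :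
    deriv (fun s : ℝ => a + b * s + c * s ^ 2 + d * s ^ 3 + e * s ^ 4) x =
      b + 2 * c * x + 3 * d * x ^ 2 + 4 * e * x ^ 3 := by
  have h := (((((hasDerivAt_const x a).add ((hasDerivAt_id x).const_mul b)).add
    ((hasDerivAt_pow 2 x).const_mul c)).add ((hasDerivAt_pow 3 x).const_mul d)).add
    ((hasDerivAt_pow 4 x).const_mul e)).deriv
  refine Eq.trans ?_ (h.trans ?_)
  · rfl
  · norm_num
    ring

lemma pdx_F18 (t u : ℝ) : pdx (F18 t u) = fun p =>
    5 * p.1 ^ 4 + 3 * p.1 ^ 2 * p.2 + 2 * t * p.1 + 2 * u * p.1 * p.2 := by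
  funext p
  obtain ⟨x, y⟩ := p
  have h := (((((hasDerivAt_const x (y ^ 2)).add (hasDerivAt_pow 5 x)).add
    ((hasDerivAt_pow 3 x).mul_const y)).add ((hasDerivAt_pow 2 x).const_mul t)).add
    (((hasDerivAt_pow 2 x).const_mul u).mul_const y)).deriv
  refine Eq.trans ?_ (h.trans ?_)
  · rfl
  · norm_num
    ring

lemma pdy_F18 (t u : ℝ) : pdy (F18 t u) = fun p =>
    2 * p.2 + p.1 ^ 3 + u * p.1 ^ 2 := by
  funext p
  obtain ⟨x, y⟩ := p
  have h := poly_deriv18 (x ^ 5 + t * x ^ 2) (x ^ 3 + u * x ^ 2) 1 0 0 y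
  refine Eq.trans ?_ (h.trans ?_)
  · unfold pdy F18
    congr 1
    funext s
    ring
  · ring

lemma P18_eq (t u : ℝ) : P18 t u = fun p =>
    12 * p.1 * p.2 + 40 * p.1 ^ 3 - 9 * p.1 ^ 4 + 4 * t + 4 * u * p.2 -
        4 * u ^ 2 * p.1 ^ 2 - 12 * u * p.1 ^ 3 := by
  funext p
  obtain ⟨x, y⟩ := p
  have h1 : fxx (F18 t u) (x, y) = 20 * x ^ 3 + 6 * x * y + 2 * t + 2 * u * y := by
    unfold fxx
    rw [pdx_F18]
    refine Eq.trans ?_ ((poly_deriv18 0 (2 * t + 2 * u * y) (3 * y) 0 5 x).trans ?_)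
    · unfold pdx
      congr 1
      funext s
      ring
    · ring
  have h2 : fxy (F18 t u) (x, y) = 3 * x ^ 2 + 2 * u * x := by
    unfold fxy
    rw [pdx_F18]
    refine Eq.trans ?_
      ((poly_deriv18 (5 * x ^ 4 + 2 * t * x) (3 * x ^ 2 + 2 * u * x) 0 0 0 y).trans ?_)
    · unfold pdy
      congr 1
      funext s
      ring
    · ring
  have h3 : fyy (F18 t u) (x, y) = 2 := by
    unfold fyy
    rw [pdy_F18]
    refine Eq.trans ?_ ((poly_deriv18 (x ^ 3 + u * x ^ 2) 2 0 0 0 y).trans ?_)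
    · unfold pdy
      congr 1
      funext s
      ring
    · ring
  simp only [P18, h1, h2, h3]
  ring

lemma pdx_P18 (t u x y : ℝ) : pdx (P18 t u) (x, y) =
    12 * y + 120 * x ^ 2 - 36 * x ^ 3 - 8 * u ^ 2 * x - 36 * u * x ^ 2 := by
  rw [P18_eq]
  refine Eq.trans ?_ ((poly_deriv18 (4 * t + 4 * u * y) (12 * y) (-4 * u ^ 2)
    (40 - 12 * u) (-9) x).trans ?_)
  · unfold pdx
    congr 1
    funext s
    ring
  · ring

lemma pdy_P18 (t u x y : ℝ) : pdy (P18 t u) (x, y) = 12 * x + 4 * u := by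
  rw [P18_eq]
  refine Eq.trans ?_ ((poly_deriv18 (40 * x ^ 3 - 9 * x ^ 4 + 4 * t - 4 * u ^ 2 * x ^ 2
    - 12 * u * x ^ 3) (12 * x + 4 * u) 0 0 0 y).trans ?_)
  · unfold pdy
    congr 1
    funext s
    ring
  · ring

lemma sing18 (t u : ℝ) (q : ℝ × ℝ) :
    (P18 t u q = 0 ∧ pdx (P18 t u) q = 0 ∧ pdy (P18 t u) q = 0) ↔
      (q = (-u / 3, -10 * u ^ 2 / 9) ∧ t = (10 / 27) * u ^ 3 + (1 / 36) * u ^ 4) := by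
  obtain ⟨x, y⟩ := q
  rw [pdx_P18, pdy_P18, P18_eq]
  simp only [Prod.mk.injEq]
  constructor
  · rintro ⟨h1, h2, h3⟩
    have hx : x = -u / 3 := by linarith
    subst hx
    have hy : y = -10 * u ^ 2 / 9 := by ring_nf at h2 ⊢; linarith
    subst hy
    refine ⟨⟨rfl, rfl⟩, ?_⟩
    ring_nf at h1 ⊢
    linarith
  · rintro ⟨⟨rfl, rfl⟩, rfl⟩
    refine ⟨?_, ?_, ?_⟩ <;> ring

/-- (i) `p(x,y;t,u) = 12xy + 40x³ − 9x⁴ + 4t + 4uy − 4u²x² − 12ux³`;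
(ii) for fixed `(t,u)` the parabolic curve has a singular point iff
`t = (10/27)u³ + (1/36)u⁴`, in which case the unique singular point is
`(x,y) = (−u/3, −10u²/9)`. -/
theorem stmt18 :
    (∀ (t u : ℝ) (p : ℝ × ℝ),
      P18 t u p = 12 * p.1 * p.2 + 40 * p.1 ^ 3 - 9 * p.1 ^ 4 + 4 * t + 4 * u * p.2 -
        4 * u ^ 2 * p.1 ^ 2 - 12 * u * p.1 ^ 3) ∧
    ∀ t u : ℝ,
      ((∃ q : ℝ × ℝ, P18 t u q = 0 ∧ pdx (P18 t u) q = 0 ∧ pdy (P18 t u) q = 0) ↔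
        t = (10 / 27) * u ^ 3 + (1 / 36) * u ^ 4) ∧
      (t = (10 / 27) * u ^ 3 + (1 / 36) * u ^ 4 →
        ∀ q : ℝ × ℝ,
          ((P18 t u q = 0 ∧ pdx (P18 t u) q = 0 ∧ pdy (P18 t u) q = 0) ↔
            q = (-u / 3, -10 * u ^ 2 / 9))) := by
  refine ⟨fun t u p => by rw [P18_eq], fun t u => ⟨⟨?_, ?_⟩, ?_⟩⟩
  · rintro ⟨q, hq⟩
    exact ((sing18 t u q).1 hq).2
  · intro h
    exact ⟨_, (sing18 t u _).2 ⟨rfl, h⟩⟩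
  · intro h q
    exact (sing18 t u q).trans ⟨fun a => a.1, fun a => ⟨a, h⟩⟩
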